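/- Let q ≥ 2 and let Θ be the linear map on V_[A] determined by Θ(A_{σ,σ·τ}) = Σ_{σ̂∈N_τ∩C_σ} A_{σ̂,iσ̂·τ} − Σ_{σ̂∈N_τ∩N_σ} A_{σ̂,iσ̂·τ} for τ ∈ σ_q and σ ∈ C_τ. Then Θ intertwines the two-copy representation: Θ(φ⊗²(U)x) = φ⊗²(U)Θ(x) for every U ∈ 𝒩_q and every x ∈ V_[A]. -/

import Mathlib

open Matrix MeasureTheory
open scoped Kronecker

noncomputable section

namespace CliffordPaper

/-- The single-qubit Pauli matrices `1, X, Y, Z`. -/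
def pauli1 : Fin 4 → Matrix (Fin 2) (Fin 2) ℂ :=
  ![1, !![0, 1; 1, 0], !![0, -Complex.I; Complex.I, 0], !![1, 0; 0, -1]]

/-- Index type for the computational basis of `q` qubits. -/
abbrev Idx (q : ℕ) := Fin q → Fin 2

/-- The space `M_d` of `d × d` complex matrices, `d = 2^q`. -/
abbrev Mat (q : ℕ) := Matrix (Idx q) (Idx q) ℂ

/-- The space `M_d ⊗ M_d`, realized as matrices indexed by the product index set
(the tensor factors combine via the Kronecker product `⊗ₖ`). -/
abbrev BMat (q : ℕ) := Matrix (Idx q × Idx q) (Idx q × Idx q) ℂ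

/-- The `q`-fold Kronecker product of single-qubit Paulis with labels `a`. -/
def PauliOp {q : ℕ} (a : Fin q → Fin 4) : Mat q :=
  Matrix.of fun x y => ∏ i, pauli1 (a i) (x i) (y i)

/-- `√d` as a complex number, where `d = 2^q`. -/
def sqrtd (q : ℕ) : ℂ := (Real.sqrt (2 ^ q) : ℝ)

/-- The set `σ̂_q` of normalized Pauli operators. -/
def sigmaHat (q : ℕ) : Set (Mat q) :=
  {M | ∃ a : Fin q → Fin 4, M = (sqrtd q)⁻¹ • PauliOp a}

/-- The normalized identity `σ₀ = 1/√d`. -/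
def sigma0 (q : ℕ) : Mat q := (sqrtd q)⁻¹ • (1 : Mat q)

/-- `σ_q = σ̂_q \ {σ₀}`. -/
def sigmaSet (q : ℕ) : Set (Mat q) := sigmaHat q \ {sigma0 q}

/-- `N_τ`: the normalized nonidentity Paulis anticommuting with `τ`. -/
def NSet {q : ℕ} (τ : Mat q) : Set (Mat q) :=
  {σ | σ ∈ sigmaSet q ∧ σ * τ + τ * σ = 0}

/-- `C_τ`: the normalized nonidentity Paulis distinct from `τ` commuting with `τ`. -/
def CSet {q : ℕ} (τ : Mat q) : Set (Mat q) :=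
  {σ | σ ∈ sigmaSet q ∧ σ ≠ τ ∧ σ * τ = τ * σ}

/-- `Ĉ_τ`: the normalized Paulis commuting with `τ`. -/
def CHatSet {q : ℕ} (τ : Mat q) : Set (Mat q) :=
  {σ | σ ∈ sigmaHat q ∧ σ * τ = τ * σ}

/-- The normalized product `σ·τ = √d στ`. -/
def nprod {q : ℕ} (σ τ : Mat q) : Mat q := sqrtd q • (σ * τ)

/-- The Clifford normalizer `𝒩_q`: unitaries mapping normalized Paulis to
signed normalized Paulis under conjugation. -/
def Cliff (q : ℕ) : Set (Mat q) :=
  {U | U ∈ Matrix.unitaryGroup (Idx q) ℂ ∧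
    ∀ σ ∈ sigmaHat q, ∃ τ ∈ sigmaHat q, U * σ * Uᴴ = τ ∨ U * σ * Uᴴ = -τ}

/-- The two-copy representation `φ⊗²(U) : A ⊗ B ↦ (UAU†) ⊗ (UBU†)`, extended linearly. -/
def twoCopy {q : ℕ} (U : Mat q) : BMat q →ₗ[ℂ] BMat q where
  toFun M := (U ⊗ₖ U) * M * (U ⊗ₖ U)ᴴ
  map_add' M N := by
    show (U ⊗ₖ U) * (M + N) * (U ⊗ₖ U)ᴴ = (U ⊗ₖ U) * M * (U ⊗ₖ U)ᴴ + (U ⊗ₖ U) * N * (U ⊗ₖ U)ᴴ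
    rw [Matrix.mul_add, Matrix.add_mul]
  map_smul' c M := by
    show (U ⊗ₖ U) * (c • M) * (U ⊗ₖ U)ᴴ = c • ((U ⊗ₖ U) * M * (U ⊗ₖ U)ᴴ)
    rw [Matrix.mul_smul, Matrix.smul_mul]

/-- The Hilbert–Schmidt inner product `⟨A, B⟩ = tr(A† B)`. -/
def hs {q : ℕ} (A B : BMat q) : ℂ := (Aᴴ * B).trace

/-- A subspace is invariant under the two-copy representation of `𝒩_q`. -/
def IsInvariant (q : ℕ) (W : Submodule ℂ (BMat q)) : Prop :=
  ∀ U ∈ Cliff q, ∀ v ∈ W, twoCopy U v ∈ W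

/-- A nonzero invariant subspace carries an irreducible subrepresentation. -/
def CarriesIrred (q : ℕ) (W : Submodule ℂ (BMat q)) : Prop :=
  W ≠ ⊥ ∧ IsInvariant q W ∧ ∀ W' ≤ W, IsInvariant q W' → W' = ⊥ ∨ W' = W

/-- Two invariant subspaces carry equivalent subrepresentations: there is a linear
isomorphism between them intertwining the two-copy representation. -/
def EquivRep (q : ℕ) (W W' : Submodule ℂ (BMat q)) : Prop :=
  ∃ T : BMat q →ₗ[ℂ] BMat q, Submodule.map T W = W' ∧
    (∀ x ∈ W, T x = 0 → x = 0) ∧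
    ∀ U ∈ Cliff q, ∀ x ∈ W, T (twoCopy U x) = twoCopy U (T x)

/-- `S_{σ,τ} = (σ⊗τ + τ⊗σ)/√2`. -/
def SVec {q : ℕ} (σ τ : Mat q) : BMat q :=
  ((Real.sqrt 2 : ℂ))⁻¹ • (σ ⊗ₖ τ + τ ⊗ₖ σ)

/-- `A_{σ,τ} = (σ⊗τ − τ⊗σ)/√2`. -/
def AVec {q : ℕ} (σ τ : Mat q) : BMat q :=
  ((Real.sqrt 2 : ℂ))⁻¹ • (σ ⊗ₖ τ - τ ⊗ₖ σ)

/-- The trivial sector `V_id`. -/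
def Vid (q : ℕ) : Submodule ℂ (BMat q) :=
  Submodule.span ℂ {sigma0 q ⊗ₖ sigma0 q}

/-- The right adjoint sector `V_r`. -/
def Vr (q : ℕ) : Submodule ℂ (BMat q) :=
  Submodule.span ℂ {M | ∃ τ ∈ sigmaSet q, M = sigma0 q ⊗ₖ τ}

/-- The left adjoint sector `V_l`. -/
def Vl (q : ℕ) : Submodule ℂ (BMat q) :=
  Submodule.span ℂ {M | ∃ τ ∈ sigmaSet q, M = τ ⊗ₖ sigma0 q}

/-- The diagonal sector `V_d`. -/
def Vdiag (q : ℕ) : Submodule ℂ (BMat q) :=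
  Submodule.span ℂ {M | ∃ τ ∈ sigmaSet q, M = τ ⊗ₖ τ}

/-- The symmetric commuting sector `V_[S]`. -/
def VScom (q : ℕ) : Submodule ℂ (BMat q) :=
  Submodule.span ℂ {M | ∃ τ ∈ sigmaSet q, ∃ σ ∈ CSet τ, M = SVec σ τ}

/-- The symmetric anti-commuting sector `V_{S}`. -/
def VSanti (q : ℕ) : Submodule ℂ (BMat q) :=
  Submodule.span ℂ {M | ∃ τ ∈ sigmaSet q, ∃ σ ∈ NSet τ, M = SVec σ τ}

/-- The antisymmetric commuting sector `V_[A]`. -/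
def VAcom (q : ℕ) : Submodule ℂ (BMat q) :=
  Submodule.span ℂ {M | ∃ τ ∈ sigmaSet q, ∃ σ ∈ CSet τ, M = AVec σ τ}

/-- The antisymmetric anti-commuting sector `V_{A}`. -/
def VAanti (q : ℕ) : Submodule ℂ (BMat q) :=
  Submodule.span ℂ {M | ∃ τ ∈ sigmaSet q, ∃ σ ∈ NSet τ, M = AVec σ τ}

/-- `V_[A]` presented with the spanning vectors `A_{σ,σ·τ}`, `σ ∈ C_τ`. -/
def VAcom' (q : ℕ) : Submodule ℂ (BMat q) :=
  Submodule.span ℂ {M | ∃ τ ∈ sigmaSet q, ∃ σ ∈ CSet τ, M = AVec σ (nprod σ τ)}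

/-- `V_0 = span{Σ_{σ∈σ_q} σ⊗σ}`. -/
def V0diag (q : ℕ) : Submodule ℂ (BMat q) :=
  Submodule.span ℂ {∑ᶠ σ ∈ sigmaSet q, σ ⊗ₖ σ}

/-- `V_1`, the "positive" part of the diagonal sector. -/
def V1diag (q : ℕ) : Submodule ℂ (BMat q) :=
  Submodule.span ℂ {v | ∃ lam : Mat q → ℂ,
    v = ∑ᶠ σ ∈ sigmaSet q, lam σ • (σ ⊗ₖ σ) ∧
    (∑ᶠ σ ∈ sigmaSet q, lam σ) = 0 ∧
    ∀ τ ∈ sigmaSet q, (∑ᶠ σ ∈ NSet τ, lam σ) = -((2 ^ q : ℂ) / 2) * lam τ}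

/-- `V_2`, the "negative" part of the diagonal sector. -/
def V2diag (q : ℕ) : Submodule ℂ (BMat q) :=
  Submodule.span ℂ {v | ∃ lam : Mat q → ℂ,
    v = ∑ᶠ σ ∈ sigmaSet q, lam σ • (σ ⊗ₖ σ) ∧
    (∑ᶠ σ ∈ sigmaSet q, lam σ) = 0 ∧
    ∀ τ ∈ sigmaSet q, (∑ᶠ σ ∈ NSet τ, lam σ) = ((2 ^ q : ℂ) / 2) * lam τ}

/-- `v^[adj]_τ = (2|C_τ|)^{-1/2} Σ_{σ∈C_τ} S_{σ,σ·τ}`. -/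
def vadjS {q : ℕ} (τ : Mat q) : BMat q :=
  ((Real.sqrt (2 * ((CSet τ).ncard : ℝ)) : ℂ))⁻¹ • ∑ᶠ σ ∈ CSet τ, SVec σ (nprod σ τ)

/-- `v^{adj}_τ = (2|N_τ|)^{-1/2} Σ_{σ∈N_τ} A_{σ,iσ·τ}`. -/
def vadjA {q : ℕ} (τ : Mat q) : BMat q :=
  ((Real.sqrt (2 * ((NSet τ).ncard : ℝ)) : ℂ))⁻¹ •
    ∑ᶠ σ ∈ NSet τ, AVec σ (Complex.I • nprod σ τ)

/-- The symmetric adjoint sector `V_[adj]`. -/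
def VadjS (q : ℕ) : Submodule ℂ (BMat q) :=
  Submodule.span ℂ {M | ∃ τ ∈ sigmaSet q, M = vadjS τ}

/-- The antisymmetric adjoint sector `V_{adj}`. -/
def VadjA (q : ℕ) : Submodule ℂ (BMat q) :=
  Submodule.span ℂ {M | ∃ τ ∈ sigmaSet q, M = vadjA τ}

/-- The orthogonal complement `V^⊥_{adj}` of `V_{adj}` inside `V_{A}`. -/
def VadjAperp (q : ℕ) : Submodule ℂ (BMat q) :=
  Submodule.span ℂ {v | v ∈ VAanti q ∧ ∀ w ∈ VadjA q, hs w v = 0}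

/-- `V_{1}^τ`. -/
def V1symτ (q : ℕ) (τ : Mat q) : Submodule ℂ (BMat q) :=
  Submodule.span ℂ {v | ∃ lam : Mat q → ℂ,
    v = ∑ᶠ σ ∈ NSet τ, lam σ • SVec σ (Complex.I • nprod σ τ) ∧
    ∀ ν ∈ NSet τ, (∑ᶠ σ ∈ NSet τ ∩ CSet ν, lam σ) - (∑ᶠ σ ∈ NSet τ ∩ NSet ν, lam σ)
      = ((2 ^ q : ℂ) / 2) * lam ν}

/-- `V_{2}^τ`. -/
def V2symτ (q : ℕ) (τ : Mat q) : Submodule ℂ (BMat q) :=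
  Submodule.span ℂ {v | ∃ lam : Mat q → ℂ,
    v = ∑ᶠ σ ∈ NSet τ, lam σ • SVec σ (Complex.I • nprod σ τ) ∧
    ∀ ν ∈ NSet τ, (∑ᶠ σ ∈ NSet τ ∩ CSet ν, lam σ) - (∑ᶠ σ ∈ NSet τ ∩ NSet ν, lam σ)
      = -((2 ^ q : ℂ) / 2) * lam ν}

/-- `V_{1} = ⊕_τ V_{1}^τ`. -/
def V1sym (q : ℕ) : Submodule ℂ (BMat q) := ⨆ τ ∈ sigmaSet q, V1symτ q τ

/-- `V_{2} = ⊕_τ V_{2}^τ`. -/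
def V2sym (q : ℕ) : Submodule ℂ (BMat q) := ⨆ τ ∈ sigmaSet q, V2symτ q τ

/-- The defining property of the map `Θ` on `V_[A]`. -/
def ThetaProp (q : ℕ) (Θ : BMat q →ₗ[ℂ] BMat q) : Prop :=
  ∀ τ ∈ sigmaSet q, ∀ σ ∈ CSet τ,
    Θ (AVec σ (nprod σ τ)) =
      (∑ᶠ σ' ∈ NSet τ ∩ CSet σ, AVec σ' (Complex.I • nprod σ' τ)) -
      ∑ᶠ σ' ∈ NSet τ ∩ NSet σ, AVec σ' (Complex.I • nprod σ' τ)

/-- `V` = span of off-diagonal products `σ⊗σ̂`, `σ ≠ σ̂`. -/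
def Voff (q : ℕ) : Submodule ℂ (BMat q) :=
  Submodule.span ℂ {M | ∃ σ ∈ sigmaSet q, ∃ σ' ∈ sigmaSet q, σ ≠ σ' ∧ M = σ ⊗ₖ σ'}

/-- `V^τ` = span of the `σ⊗σ̂` with `σ·σ̂ ∈ {τ, −τ, iτ, −iτ}`. -/
def Vtau (q : ℕ) (τ : Mat q) : Submodule ℂ (BMat q) :=
  Submodule.span ℂ {M | ∃ σ ∈ sigmaSet q, ∃ σ' ∈ sigmaSet q,
    (nprod σ σ' = τ ∨ nprod σ σ' = -τ ∨ nprod σ σ' = Complex.I • τ ∨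
      nprod σ σ' = -(Complex.I • τ)) ∧ M = σ ⊗ₖ σ'}


/-!
Modulo signs, a Clifford unitary `U` permutes the finite set `σ̂_q`, because `σ̂_q` never contains
both `σ` and `-σ` (the trace of a product of two Pauli operators is never negative). This
permutation fixes `σ₀` and preserves commutation and anticommutation, so it carries `N_τ` and `C_τ`
onto the corresponding sets of the image of `τ`. In `A_{σ,σ·τ}` the sign of `UσU†` occurs twice and
cancels, which leaves the sign of `UτU†`. That sign does not depend on `σ`, so it is a common factor
of `A_{σ,σ·τ}` and of every term of `Θ(A_{σ,σ·τ})`, and reindexing the two sums along the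
permutation gives the claim on generators.
-/

section Unsign

variable {M : Type*} [AddCommGroup M] (P : Set M)

open Classical in
/-- The sign `s = ±1` for which `s • a ∈ P`, where `P` contains at most one of `a`, `-a`;
it is `-1` when neither lies in `P`. -/
def signIn (a : M) : ℤˣ := if a ∈ P then 1 else -1

/-- The representative in `P` of the pair `±a`, for `P` containing exactly one of `a`, `-a`. -/
def unsign (a : M) : M := signIn P a • a

variable {P}

theorem unsign_of_mem {a : M} (ha : a ∈ P) : unsign P a = a := by
  simp [unsign, signIn, ha]

theorem unsign_mem {a : M} (ha : a ∈ P ∨ -a ∈ P) : unsign P a ∈ P := by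
  by_cases h : a ∈ P
  · rwa [unsign_of_mem h]
  · simpa [unsign, signIn, h] using ha

theorem signIn_smul_unsign (a : M) : signIn P a • unsign P a = a := by
  rw [unsign, smul_smul, Int.units_mul_self, one_smul]

theorem eq_smul_of_unsign_eq {a b : M} (h : unsign P a = unsign P b) :
    a = (signIn P a * signIn P b) • b := by
  rw [mul_smul, ← unsign, ← h, signIn_smul_unsign]

theorem eq_of_eq_units_smul (hP : ∀ a ∈ P, -a ∉ P) {a b : M} (ha : a ∈ P) (hb : b ∈ P)
    {s : ℤˣ} (h : a = s • b) : a = b := by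
  obtain rfl | rfl := Int.units_eq_one_or s
  · simpa using h
  · exact absurd (by simpa [h] using ha) (hP b hb)

theorem bijOn_unsign_comp (hfin : P.Finite) (hP : ∀ a ∈ P, -a ∉ P) {φ : M →+ M}
    (hφ : Function.Injective φ) (hφP : ∀ a ∈ P, φ a ∈ P ∨ -φ a ∈ P) :
    Set.BijOn (fun a => unsign P (φ a)) P P := by
  refine (hfin.injOn_iff_bijOn_of_mapsTo fun a ha => unsign_mem (hφP a ha)).mp ?_
  intro a ha b hb hab
  have hφab : φ a = φ ((signIn P (φ a) * signIn P (φ b)) • b) := by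
    rw [Units.smul_def, map_zsmul, ← Units.smul_def]
    exact eq_smul_of_unsign_eq hab
  exact eq_of_eq_units_smul hP ha hb (hφ hφab)

end Unsign

section UnsignRing

variable {R : Type*} [Ring R] {P : Set R}

theorem unsign_mul_unsign (a b : R) :
    unsign P a * unsign P b = (signIn P a * signIn P b) • (a * b) :=
  smul_mul_smul_comm _ _ _ _

theorem unsign_commute_iff (a b : R) :
    unsign P a * unsign P b = unsign P b * unsign P a ↔ a * b = b * a := by
  rw [unsign_mul_unsign, unsign_mul_unsign, mul_comm (signIn P b), smul_left_cancel_iff]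

theorem unsign_anticommute_iff (a b : R) :
    unsign P a * unsign P b + unsign P b * unsign P a = 0 ↔ a * b + b * a = 0 := by
  rw [unsign_mul_unsign, unsign_mul_unsign, mul_comm (signIn P b), ← smul_add,
    smul_eq_zero_iff_eq]

end UnsignRing

theorem bijOn_sep {α β : Type*} {f : α → β} {s : Set α} {t : Set β} {p : α → Prop}
    {r : β → Prop} (hf : Set.BijOn f s t) (hpr : ∀ a ∈ s, r (f a) ↔ p a) :
    Set.BijOn f {a | a ∈ s ∧ p a} {b | b ∈ t ∧ r b} := by
  refine ⟨fun a ha => ⟨hf.mapsTo ha.1, (hpr a ha.1).2 ha.2⟩,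
    hf.injOn.mono fun a ha => ha.1, ?_⟩
  rintro b ⟨hb, hrb⟩
  obtain ⟨a, ha, rfl⟩ := hf.surjOn hb
  exact ⟨a, ⟨ha, (hpr a ha).1 hrb⟩, rfl⟩

section Pauli

theorem trace_of_prod_mul_of_prod {ι n R : Type*} [Fintype ι] [DecidableEq ι] [Fintype n]
    [CommSemiring R] (A B : ι → Matrix n n R) :
    ((of fun x y : ι → n => ∏ i, A i (x i) (y i)) *
      of fun x y : ι → n => ∏ i, B i (x i) (y i)).trace = ∏ i, (A i * B i).trace := by
  simp only [trace, diag, mul_apply, of_apply, ← Finset.prod_mul_distrib, Finset.prod_univ_sum,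
    Fintype.piFinset_univ]

theorem trace_pauli1_mul_pauli1 (a b : Fin 4) :
    (pauli1 a * pauli1 b).trace = if a = b then 2 else 0 := by
  fin_cases a <;> fin_cases b <;> simp [pauli1, trace_fin_two] <;> norm_num

variable {q : ℕ}

theorem trace_PauliOp_mul_PauliOp (a b : Fin q → Fin 4) :
    (PauliOp a * PauliOp b).trace = if a = b then 2 ^ q else 0 := by
  rw [PauliOp, PauliOp, trace_of_prod_mul_of_prod]
  simp [trace_pauli1_mul_pauli1, Finset.prod_ite_zero, funext_iff]

theorem PauliOp_ne_neg_PauliOp (a b : Fin q → Fin 4) : PauliOp a ≠ -PauliOp b := by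
  intro h
  have htrace : (if a = b then (2 : ℂ) ^ q else 0) = -2 ^ q := by
    rw [← trace_PauliOp_mul_PauliOp, h, neg_mul, trace_neg, trace_PauliOp_mul_PauliOp, if_pos rfl]
  have hpow : (2 : ℂ) ^ q ≠ 0 := pow_ne_zero q two_ne_zero
  split_ifs at htrace
  · exact hpow (self_eq_neg.mp htrace)
  · exact hpow (zero_eq_neg.mp htrace)

theorem sqrtd_ne_zero (q : ℕ) : sqrtd q ≠ 0 := by
  rw [sqrtd, Complex.ofReal_ne_zero]
  positivity

theorem neg_notMem_sigmaHat : ∀ σ ∈ sigmaHat q, -σ ∉ sigmaHat q := by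
  rintro _ ⟨a, rfl⟩ ⟨b, hb⟩
  rw [← smul_neg, smul_right_inj (inv_ne_zero (sqrtd_ne_zero q))] at hb
  exact PauliOp_ne_neg_PauliOp b a hb.symm

theorem sigmaHat_finite (q : ℕ) : (sigmaHat q).Finite :=
  (Set.finite_range fun a : Fin q → Fin 4 => (sqrtd q)⁻¹ • PauliOp a).subset
    fun _ ⟨a, ha⟩ => ⟨a, ha.symm⟩

theorem PauliOp_zero : PauliOp (0 : Fin q → Fin 4) = 1 := by
  ext x y
  simp [PauliOp, pauli1, one_apply, Finset.prod_ite_zero, funext_iff]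

theorem sigma0_mem_sigmaHat (q : ℕ) : sigma0 q ∈ sigmaHat q :=
  ⟨0, by rw [PauliOp_zero, sigma0]⟩

theorem NSet_finite (τ : Mat q) : (NSet τ).Finite :=
  (sigmaHat_finite q).subset fun _ hσ => hσ.1.1

end Pauli

section PauliAction

variable {q : ℕ} (U : unitaryGroup (Idx q) ℂ)

/-- Conjugation `A ↦ UAU†`, as an automorphism of `M_d`. -/
abbrev conjAut : Mat q ≃⋆ₐ[ℂ] Mat q := Unitary.conjStarAlgAut ℂ (Mat q) U

/-- The action of a Clifford unitary on `σ̂_q` modulo signs: `UσU† = ±(pauliAction U σ)`. -/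
def pauliAction (σ : Mat q) : Mat q := unsign (sigmaHat q) (conjAut U σ)

theorem pauliAction_sigma0 : pauliAction U (sigma0 q) = sigma0 q := by
  have hconj : conjAut U (sigma0 q) = sigma0 q := by rw [sigma0, map_smul, map_one]
  rw [pauliAction, hconj, unsign_of_mem (sigma0_mem_sigmaHat q)]

theorem pauliAction_commute_iff (σ τ : Mat q) :
    pauliAction U σ * pauliAction U τ = pauliAction U τ * pauliAction U σ ↔ σ * τ = τ * σ := by
  rw [pauliAction, pauliAction, unsign_commute_iff, ← map_mul, ← map_mul,
    EmbeddingLike.apply_eq_iff_eq]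

theorem pauliAction_anticommute_iff (σ τ : Mat q) :
    pauliAction U σ * pauliAction U τ + pauliAction U τ * pauliAction U σ = 0 ↔
      σ * τ + τ * σ = 0 := by
  rw [pauliAction, pauliAction, unsign_anticommute_iff, ← map_mul, ← map_mul, ← map_add,
    EmbeddingLike.map_eq_zero_iff]

variable {U}

theorem bijOn_pauliAction_sigmaHat (hU : (U : Mat q) ∈ Cliff q) :
    Set.BijOn (pauliAction U) (sigmaHat q) (sigmaHat q) := by
  refine bijOn_unsign_comp (φ := (conjAut U : Mat q →+ Mat q)) (sigmaHat_finite q)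
    neg_notMem_sigmaHat (conjAut U).injective fun σ hσ => ?_
  obtain ⟨τ, hτ, h | h⟩ := hU.2 σ hσ
  · exact Or.inl (Set.mem_of_eq_of_mem h hτ)
  · exact Or.inr (Set.mem_of_eq_of_mem (neg_eq_iff_eq_neg.mpr h) hτ)

theorem bijOn_pauliAction_sigmaSet (hU : (U : Mat q) ∈ Cliff q) :
    Set.BijOn (pauliAction U) (sigmaSet q) (sigmaSet q) := by
  simpa only [sigmaSet, pauliAction_sigma0] using
    (bijOn_pauliAction_sigmaHat hU).sdiff_singleton (sigma0_mem_sigmaHat q)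

theorem bijOn_pauliAction_NSet (hU : (U : Mat q) ∈ Cliff q) (τ : Mat q) :
    Set.BijOn (pauliAction U) (NSet τ) (NSet (pauliAction U τ)) :=
  bijOn_sep (bijOn_pauliAction_sigmaSet hU) fun σ _ => pauliAction_anticommute_iff U σ τ

theorem bijOn_pauliAction_CSet (hU : (U : Mat q) ∈ Cliff q) {τ : Mat q} (hτ : τ ∈ sigmaSet q) :
    Set.BijOn (pauliAction U) (CSet τ) (CSet (pauliAction U τ)) :=
  bijOn_sep (bijOn_pauliAction_sigmaSet hU) fun σ hσ =>
    and_congr ((bijOn_pauliAction_sigmaSet hU).injOn.ne_iff hσ hτ) (pauliAction_commute_iff U σ τ)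

end PauliAction

section TwoCopy

variable {q : ℕ}

theorem AVec_smul_smul {R : Type*} [CommMonoid R] [DistribMulAction R ℂ] [IsScalarTower R ℂ ℂ]
    (r s : R) (A B : Mat q) : AVec (r • A) (s • B) = (r * s) • AVec A B := by
  simp only [AVec, smul_kronecker, kronecker_smul, smul_smul, ← smul_sub, mul_comm s r]
  exact (smul_comm (r * s) _ _).symm

theorem AVec_smul_right (c : ℂ) (A B : Mat q) : AVec A (c • B) = c • AVec A B := by
  simpa only [one_smul, one_mul] using AVec_smul_smul 1 c A B

theorem units_smul_nprod (s t : ℤˣ) (σ τ : Mat q) :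
    nprod (s • σ) (t • τ) = (s * t) • nprod σ τ := by
  rw [nprod, nprod, smul_mul_smul_comm, smul_comm]

theorem twoCopy_AVec (U : unitaryGroup (Idx q) ℂ) (A B : Mat q) :
    twoCopy (U : Mat q) (AVec A B) = AVec (conjAut U A) (conjAut U B) := by
  have hkron (A B : Mat q) : twoCopy (U : Mat q) (A ⊗ₖ B) = conjAut U A ⊗ₖ conjAut U B := by
    simp [twoCopy, conjTranspose_kronecker, mul_kronecker_mul, star_eq_conjTranspose]
  rw [AVec, AVec, map_smul, map_sub, hkron, hkron]

theorem twoCopy_AVec_nprod (U : unitaryGroup (Idx q) ℂ) (σ τ : Mat q) :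
    twoCopy (U : Mat q) (AVec σ (nprod σ τ)) = signIn (sigmaHat q) (conjAut U τ) •
      AVec (pauliAction U σ) (nprod (pauliAction U σ) (pauliAction U τ)) := by
  set s := signIn (sigmaHat q) (conjAut U σ)
  set t := signIn (sigmaHat q) (conjAut U τ)
  have hσ : conjAut U σ = s • pauliAction U σ := (signIn_smul_unsign _).symm
  have hτ : conjAut U τ = t • pauliAction U τ := (signIn_smul_unsign _).symm
  have hnprod : conjAut U (nprod σ τ) = nprod (conjAut U σ) (conjAut U τ) := by
    rw [nprod, nprod, map_smul, map_mul]
  rw [twoCopy_AVec, hnprod, hσ, hτ, units_smul_nprod, AVec_smul_smul, ← mul_assoc,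
    Int.units_mul_self, one_mul]

theorem twoCopy_finsum_AVec {U : unitaryGroup (Idx q) ℂ} {S T : Set (Mat q)} (hS : S.Finite)
    (hST : Set.BijOn (pauliAction U) S T) (τ : Mat q) :
    twoCopy (U : Mat q) (∑ᶠ σ ∈ S, AVec σ (Complex.I • nprod σ τ)) =
      signIn (sigmaHat q) (conjAut U τ) •
        ∑ᶠ σ ∈ T, AVec σ (Complex.I • nprod σ (pauliAction U τ)) := by
  have hT : T.Finite := hST.finite_iff_finite.mp hS
  rw [smul_finsum_mem hT]
  refine ((twoCopy (U : Mat q)).toAddMonoidHom.map_finsum_mem _ hS).trans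
    (finsum_mem_eq_of_bijOn _ hST fun σ _ => ?_)
  change twoCopy (U : Mat q) _ = _
  rw [AVec_smul_right, AVec_smul_right, map_smul, twoCopy_AVec_nprod, smul_comm]

/-- The prescribed value of `Θ` on `A_{σ,σ·τ}`. -/
def thetaVec (σ τ : Mat q) : BMat q :=
  (∑ᶠ σ' ∈ NSet τ ∩ CSet σ, AVec σ' (Complex.I • nprod σ' τ)) -
    ∑ᶠ σ' ∈ NSet τ ∩ NSet σ, AVec σ' (Complex.I • nprod σ' τ)

theorem twoCopy_thetaVec {U : unitaryGroup (Idx q) ℂ} (hU : (U : Mat q) ∈ Cliff q) {σ : Mat q}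
    (hσ : σ ∈ sigmaSet q) (τ : Mat q) :
    twoCopy (U : Mat q) (thetaVec σ τ) = signIn (sigmaHat q) (conjAut U τ) •
      thetaVec (pauliAction U σ) (pauliAction U τ) := by
  have hinj : Set.InjOn (pauliAction U) (sigmaSet q) := (bijOn_pauliAction_sigmaSet hU).injOn
  have hN : Set.BijOn (pauliAction U) (NSet τ ∩ NSet σ)
      (NSet (pauliAction U τ) ∩ NSet (pauliAction U σ)) :=
    (bijOn_pauliAction_NSet hU τ).inter (bijOn_pauliAction_NSet hU σ)
      (hinj.mono (Set.union_subset (fun _ h => h.1) fun _ h => h.1))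
  have hC : Set.BijOn (pauliAction U) (NSet τ ∩ CSet σ)
      (NSet (pauliAction U τ) ∩ CSet (pauliAction U σ)) :=
    (bijOn_pauliAction_NSet hU τ).inter (bijOn_pauliAction_CSet hU hσ)
      (hinj.mono (Set.union_subset (fun _ h => h.1) fun _ h => h.1))
  rw [thetaVec, thetaVec, map_sub, smul_sub,
    twoCopy_finsum_AVec ((NSet_finite τ).inter_of_left _) hC,
    twoCopy_finsum_AVec ((NSet_finite τ).inter_of_left _) hN]

end TwoCopy

/-- `Θ` intertwines the two-copy representation on `V_[A]`. -/
theorem statement10 (q : ℕ) (hq : 2 ≤ q)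
    (Θ : BMat q →ₗ[ℂ] BMat q) (hΘ : ThetaProp q Θ) :
    ∀ U ∈ Cliff q, ∀ x ∈ VAcom' q, Θ (twoCopy U x) = twoCopy U (Θ x) := by
  intro U hU x hx
  lift U to unitaryGroup (Idx q) ℂ using hU.1
  refine LinearMap.eqOn_span (f := Θ ∘ₗ twoCopy (U : Mat q)) (g := twoCopy (U : Mat q) ∘ₗ Θ) ?_ hx
  rintro _ ⟨τ, hτ, σ, hσ, rfl⟩
  have hτ' : pauliAction U τ ∈ sigmaSet q := (bijOn_pauliAction_sigmaSet hU).mapsTo hτ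
  have hσ' : pauliAction U σ ∈ CSet (pauliAction U τ) :=
    (bijOn_pauliAction_CSet hU hτ).mapsTo hσ
  calc Θ (twoCopy (U : Mat q) (AVec σ (nprod σ τ)))
    _ = signIn (sigmaHat q) (conjAut U τ) •
          Θ (AVec (pauliAction U σ) (nprod (pauliAction U σ) (pauliAction U τ))) := by
      rw [twoCopy_AVec_nprod, LinearMap.map_smul_of_tower]
    _ = signIn (sigmaHat q) (conjAut U τ) • thetaVec (pauliAction U σ) (pauliAction U τ) := by
      rw [hΘ _ hτ' _ hσ', thetaVec]
    _ = twoCopy (U : Mat q) (thetaVec σ τ) := (twoCopy_thetaVec hU hσ.1 τ).symm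
    _ = twoCopy (U : Mat q) (Θ (AVec σ (nprod σ τ))) := by rw [hΘ τ hτ σ hσ, thetaVec]

end CliffordPaper
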